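/- Suppose that in degree k the spaces H^k_∂, H^k_A, H^k_BC, A^k, B^k, C^k, D^k, E^k, F^k are finite-dimensional. Then dim H^k_A + dim D^k = dim H^k_∂ + dim A^k + dim E^k, and dim H^k_BC + dim C^k = dim H^k_∂ + dim B^k + dim F^k (the versions of the Varouchas dimension identities obtained by interchanging the roles of ∂ and ∂̄). -/

import Mathlib

open Submodule LinearMap Module

section Setup

variable (U : ℤ → Type*) [∀ k, AddCommGroup (U k)] [∀ k, Module ℂ (U k)]

/-- The identification `U a → U b` induced by an equality `a = b` of degrees. -/
def castU {a b : ℤ} (h : a = b) : U a →ₗ[ℂ] U b := by subst h; exact LinearMap.id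

variable (D : ∀ k : ℤ, U k →ₗ[ℂ] U (k + 1)) (Db : ∀ k : ℤ, U k →ₗ[ℂ] U (k - 1))

/-- The composite `∂∂̄ : U^k → U^{k-1} → U^k`. -/
def ddbar (k : ℤ) : U k →ₗ[ℂ] U k :=
  (castU U (show k - 1 + 1 = k by ring)).comp ((D (k - 1)).comp (Db k))

/-- `ker ∂ ∩ U^k` -/
def kerD (k : ℤ) : Submodule ℂ (U k) := LinearMap.ker (D k)

/-- `ker ∂̄ ∩ U^k` -/
def kerDb (k : ℤ) : Submodule ℂ (U k) := LinearMap.ker (Db k)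

/-- `∂(U^{k-1})` -/
def imD (k : ℤ) : Submodule ℂ (U k) :=
  LinearMap.range ((castU U (show k - 1 + 1 = k by ring)).comp (D (k - 1)))

/-- `∂̄(U^{k+1})` -/
def imDb (k : ℤ) : Submodule ℂ (U k) :=
  LinearMap.range ((castU U (show k + 1 - 1 = k by ring)).comp (Db (k + 1)))

/-- `ker (∂∂̄) ∩ U^k` -/
def kerDDbar (k : ℤ) : Submodule ℂ (U k) := LinearMap.ker (ddbar U D Db k)

/-- `(∂∂̄)(U^k)` -/
def imDDbar (k : ℤ) : Submodule ℂ (U k) := LinearMap.range (ddbar U D Db k)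

end Setup

/-- The quotient of a submodule `p` by (the preimage in `p` of) a submodule `q`. -/
abbrev SubQuot {V : Type*} [AddCommGroup V] [Module ℂ V] (p q : Submodule ℂ V) :=
  ↥p ⧸ q.comap p.subtype

/-- The map `p/q → p'/q'` induced by the identity (inclusion) on representatives. -/
def qmap {V : Type*} [AddCommGroup V] [Module ℂ V] {p p' q q' : Submodule ℂ V}
    (hp : p ≤ p') (hq : q ≤ q') : SubQuot p q →ₗ[ℂ] SubQuot p' q' :=
  Submodule.mapQ _ _ (Submodule.inclusion hp) fun x hx => by
    simp only [Submodule.mem_comap, Submodule.subtype_apply, Submodule.coe_inclusion] at hx ⊢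
    exact hq hx

section Cohomology

variable (U : ℤ → Type*) [∀ k, AddCommGroup (U k)] [∀ k, Module ℂ (U k)]
variable (D : ∀ k : ℤ, U k →ₗ[ℂ] U (k + 1)) (Db : ∀ k : ℤ, U k →ₗ[ℂ] U (k - 1))

/-- `H^k_∂ = (ker ∂ ∩ U^k)/∂(U^{k-1})` -/
abbrev Hd (k : ℤ) := SubQuot (kerD U D k) (imD U D k)

/-- `H^k_∂̄ = (ker ∂̄ ∩ U^k)/∂̄(U^{k+1})` -/
abbrev Hdb (k : ℤ) := SubQuot (kerDb U Db k) (imDb U Db k)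

/-- `H^k_BC = (ker ∂ ∩ ker ∂̄ ∩ U^k)/(∂∂̄)(U^k)` -/
abbrev HBC (k : ℤ) := SubQuot (kerD U D k ⊓ kerDb U Db k) (imDDbar U D Db k)

/-- `H^k_A = (ker (∂∂̄) ∩ U^k)/(∂(U^{k-1}) + ∂̄(U^{k+1}))` -/
abbrev HA (k : ℤ) := SubQuot (kerDDbar U D Db k) (imD U D k ⊔ imDb U Db k)

/-- `A^k = (∂(U^{k-1}) ∩ ∂̄(U^{k+1}))/(∂∂̄)(U^k)` -/
abbrev Avar (k : ℤ) := SubQuot (imD U D k ⊓ imDb U Db k) (imDDbar U D Db k)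

/-- `B^k = (ker ∂̄ ∩ ∂(U^{k-1}))/(∂∂̄)(U^k)` -/
abbrev Bvar (k : ℤ) := SubQuot (kerDb U Db k ⊓ imD U D k) (imDDbar U D Db k)

/-- `C^k = (ker (∂∂̄) ∩ U^k)/((ker ∂̄ ∩ U^k) + ∂(U^{k-1}))` -/
abbrev Cvar (k : ℤ) := SubQuot (kerDDbar U D Db k) (kerDb U Db k ⊔ imD U D k)

/-- `D^k = (ker ∂ ∩ ∂̄(U^{k+1}))/(∂∂̄)(U^k)` -/
abbrev Dvar (k : ℤ) := SubQuot (kerD U D k ⊓ imDb U Db k) (imDDbar U D Db k)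

/-- `E^k = (ker (∂∂̄) ∩ U^k)/((ker ∂ ∩ U^k) + ∂̄(U^{k+1}))` -/
abbrev Evar (k : ℤ) := SubQuot (kerDDbar U D Db k) (kerD U D k ⊔ imDb U Db k)

/-- `F^k = (ker (∂∂̄) ∩ U^k)/((ker ∂ ∩ U^k) + (ker ∂̄ ∩ U^k))` -/
abbrev Fvar (k : ℤ) := SubQuot (kerDDbar U D Db k) (kerD U D k ⊔ kerDb U Db k)

end Cohomology
theorem sq_chain {V : Type*} [AddCommGroup V] [Module ℂ V] {p q r : Submodule ℂ V}
    (hqp : q ≤ p) (hrq : r ≤ q) :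
    Module.rank ℂ (SubQuot p r) = Module.rank ℂ (SubQuot p q) + Module.rank ℂ (SubQuot q r) := by
  let f : SubQuot p r →ₗ[ℂ] SubQuot p q := qmap le_rfl hrq
  let g : q →ₗ[ℂ] SubQuot p r := (Submodule.mkQ _).comp (Submodule.inclusion hqp)
  have hf : Function.Surjective f := by
    intro y
    obtain ⟨x, rfl⟩ := Submodule.Quotient.mk_surjective _ y
    exact ⟨Submodule.Quotient.mk x, rfl⟩
  have hker : LinearMap.ker g = r.comap q.subtype := by
    ext x
    simp [g]
  have hran : LinearMap.range g = LinearMap.ker f := by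
    ext y
    obtain ⟨x, rfl⟩ := Submodule.Quotient.mk_surjective _ y
    have h : f (Submodule.Quotient.mk x) = Submodule.Quotient.mk x := rfl
    rw [LinearMap.mem_ker, h, Submodule.Quotient.mk_eq_zero]
    constructor
    · rintro ⟨z, hz⟩
      have hz' : z.1 - x.1 ∈ r := (Submodule.Quotient.eq (r.comap p.subtype)).1 hz
      have := q.sub_mem z.2 (hrq hz')
      simpa using this
    · intro hx
      exact ⟨⟨x.1, hx⟩, rfl⟩
  have e : SubQuot q r ≃ₗ[ℂ] LinearMap.ker f :=
    (Submodule.quotEquivOfEq _ _ hker.symm).trans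
      (g.quotKerEquivRange.trans (LinearEquiv.ofEq _ _ hran))
  rw [e.rank_eq, LinearMap.rank_eq_of_surjective hf]

theorem sq_iso {V : Type*} [AddCommGroup V] [Module ℂ V] (p q : Submodule ℂ V) :
    Module.rank ℂ (SubQuot p (p ⊓ q)) = Module.rank ℂ (SubQuot (p ⊔ q) q) :=
  (LinearMap.quotientInfEquivSupQuotient p q).rank_eq

theorem sq_main {V : Type*} [AddCommGroup V] [Module ℂ V] {K I L W Z : Submodule ℂ V}
    (hIK : I ≤ K) (hW : W ≤ I ⊓ L) (hZ : K ⊔ L ≤ Z) :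
    Module.rank ℂ (SubQuot Z (I ⊔ L)) + Module.rank ℂ (SubQuot (K ⊓ L) W) =
      Module.rank ℂ (SubQuot K I) + Module.rank ℂ (SubQuot (I ⊓ L) W)
        + Module.rank ℂ (SubQuot Z (K ⊔ L)) := by
  have a1 := sq_chain hZ (sup_le_sup_right hIK L)
  have a2 := sq_chain (inf_le_inf_right L hIK) hW
  have a3 := sq_chain (p := K) (q := K ⊓ (I ⊔ L)) (r := I) inf_le_left (le_inf hIK le_sup_left)
  have a4 := sq_iso K (I ⊔ L)
  have a5 := sq_iso (K ⊓ L) I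
  rw [← sup_assoc, sup_eq_left.2 hIK] at a4
  have e1 : K ⊓ L ⊓ I = I ⊓ L := by
    rw [inf_comm, ← inf_assoc, inf_eq_left.2 hIK]
  have e2 : K ⊓ L ⊔ I = K ⊓ (I ⊔ L) := by
    rw [sup_comm, inf_comm, inf_comm K, sup_inf_assoc_of_le L hIK]
  rw [e1, e2] at a5
  rw [a1, a2, a3, a4, a5]
  ring

theorem castU_injective (U : ℤ → Type*) [∀ k, AddCommGroup (U k)] [∀ k, Module ℂ (U k)]
    {a b : ℤ} (h : a = b) : Function.Injective (castU U h) := by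
  subst h; exact fun x y hxy => hxy

theorem D_castU (U : ℤ → Type*) [∀ k, AddCommGroup (U k)] [∀ k, Module ℂ (U k)]
    (D : ∀ k : ℤ, U k →ₗ[ℂ] U (k + 1)) {a b : ℤ} (h : a = b) (x : U a) (hx : D a x = 0) :
    D b (castU U h x) = 0 := by
  subst h; exact hx

theorem Db_castU (U : ℤ → Type*) [∀ k, AddCommGroup (U k)] [∀ k, Module ℂ (U k)]
    (Db : ∀ k : ℤ, U k →ₗ[ℂ] U (k - 1)) {a b : ℤ} (h : a = b) (x : U a) (hx : Db a x = 0) :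
    Db b (castU U h x) = 0 := by
  subst h; exact hx

/-- the Varouchas dimension identities with the roles of `∂` and `∂̄`
interchanged: `dim H^k_A + dim D^k = dim H^k_∂ + dim A^k + dim E^k` and
`dim H^k_BC + dim C^k = dim H^k_∂ + dim B^k + dim F^k`. -/
theorem varouchas_dim_identities_interchanged
    (n : ℕ) (U : ℤ → Type*) [∀ k, AddCommGroup (U k)] [∀ k, Module ℂ (U k)]
    (hvan : ∀ k : ℤ, (n : ℤ) < |k| → ∀ x : U k, x = 0)
    (D : ∀ k : ℤ, U k →ₗ[ℂ] U (k + 1)) (Db : ∀ k : ℤ, U k →ₗ[ℂ] U (k - 1))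
    (hD2 : ∀ k : ℤ, (D (k + 1)).comp (D k) = 0)
    (hDb2 : ∀ k : ℤ, (Db (k - 1)).comp (Db k) = 0)
    (hanti : ∀ k : ℤ, ddbar U D Db k
      + (castU U (show k + 1 - 1 = k by ring)).comp ((Db (k + 1)).comp (D k)) = 0)
    (k : ℤ)
    (h1 : FiniteDimensional ℂ (Hd U D k))
    (h2 : FiniteDimensional ℂ (HA U D Db k))
    (h3 : FiniteDimensional ℂ (HBC U D Db k))
    (h4 : FiniteDimensional ℂ (Avar U D Db k))
    (h5 : FiniteDimensional ℂ (Bvar U D Db k))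
    (h6 : FiniteDimensional ℂ (Cvar U D Db k))
    (h7 : FiniteDimensional ℂ (Dvar U D Db k))
    (h8 : FiniteDimensional ℂ (Evar U D Db k))
    (h9 : FiniteDimensional ℂ (Fvar U D Db k)) :
    (finrank ℂ (HA U D Db k) + finrank ℂ (Dvar U D Db k)
       = finrank ℂ (Hd U D k) + finrank ℂ (Avar U D Db k) + finrank ℂ (Evar U D Db k)) ∧
    (finrank ℂ (HBC U D Db k) + finrank ℂ (Cvar U D Db k)
       = finrank ℂ (Hd U D k) + finrank ℂ (Bvar U D Db k) + finrank ℂ (Fvar U D Db k)) := by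
  have hIK : imD U D k ≤ kerD U D k := by
    rintro _ ⟨x, rfl⟩
    exact D_castU U D _ _ (LinearMap.congr_fun (hD2 (k - 1)) x)
  have hIKb : imDb U Db k ≤ kerDb U Db k := by
    rintro _ ⟨x, rfl⟩
    refine Db_castU U Db _ _ ?_
    exact LinearMap.congr_fun (hDb2 (k + 1)) x
  have hWI : imDDbar U D Db k ≤ imD U D k := by
    rintro _ ⟨x, rfl⟩
    exact ⟨Db k x, rfl⟩
  have hWIb : imDDbar U D Db k ≤ imDb U Db k := by
    rintro _ ⟨x, rfl⟩
    refine ⟨-(D k x), ?_⟩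
    have := LinearMap.congr_fun (hanti k) x
    rw [eq_neg_of_add_eq_zero_left this, map_neg]
    rfl
  have hKbZ : kerDb U Db k ≤ kerDDbar U D Db k := by
    intro x hx
    have hx' : Db k x = 0 := hx
    change ddbar U D Db k x = 0
    simp [ddbar, hx']
  have hKZ : kerD U D k ≤ kerDDbar U D Db k := by
    intro x hx
    have hx' : D k x = 0 := hx
    change ddbar U D Db k x = 0
    have := LinearMap.congr_fun (hanti k) x
    simpa [hx'] using this
  have m1 := sq_main hIK (le_inf hWI hWIb) (sup_le hKZ (hIKb.trans hKbZ))
  have m2 := sq_main hIK (le_inf hWI (hWIb.trans hIKb)) (sup_le hKZ hKbZ)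
  constructor
  · rw [← finrank_eq_rank, ← finrank_eq_rank, ← finrank_eq_rank, ← finrank_eq_rank,
      ← finrank_eq_rank] at m1
    exact_mod_cast m1
  · rw [inf_comm (imD U D k), sup_comm (imD U D k)] at m2
    rw [← finrank_eq_rank, ← finrank_eq_rank, ← finrank_eq_rank, ← finrank_eq_rank,
      ← finrank_eq_rank] at m2
    rw [add_comm]
    exact_mod_cast m2
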